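/- Let p be a prime, d ≥ 2 an integer divisible by p, and m a positive integer not divisible by p. Set r = m/d ∈ ℚ. Then for every integer E ≥ 2, the p-adic valuation of V_{r,E}(−1) = Σ_{k=0}^{E−1} (−1)^k·C(r,k) is strictly negative; in particular V_{r,E}(−1) is not a p-adic integer. -/

import Mathlib

open Polynomial Finset

/-- The generalized binomial coefficient `C(r, k) = r (r-1) ⋯ (r-k+1) / k!` for `r : ℚ`. -/
def genBinom (r : ℚ) (k : ℕ) : ℚ :=
  (∏ i ∈ Finset.range k, (r - i)) / (Nat.factorial k)

/-- The truncated binomial polynomial `V_{r,E}(x) = Σ_{k=0}^{E-1} C(r,k) x^k ∈ ℚ[x]`. -/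
noncomputable def truncBinom (r : ℚ) (E : ℕ) : Polynomial ℚ :=
  ∑ k ∈ Finset.range E, Polynomial.C (genBinom r k) * Polynomial.X ^ k

theorem aux_sign (r : ℚ) (n : ℕ) :
    (-1) ^ (n + 1) * ∏ i ∈ Finset.range (n + 1), (r - i)
      = - r * ∏ i ∈ Finset.range n, ((i : ℚ) + 1 - r) := by
  induction n with
  | zero => simp
  | succ n ih =>
    rw [Finset.prod_range_succ _ (n + 1), Finset.prod_range_succ (fun i : ℕ => (i : ℚ) + 1 - r) n, pow_succ]
    push_cast
    linear_combination ((n : ℚ) + 1 - r) * ih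

theorem aux_succ (r : ℚ) (n : ℕ) :
    (truncBinom r (n + 1)).eval (-1)
      = (∏ i ∈ Finset.range n, ((i : ℚ) + 1 - r)) / (Nat.factorial n) := by
  induction n with
  | zero => simp [truncBinom, genBinom]
  | succ n ih =>
    have h : (truncBinom r (n + 1 + 1)).eval (-1)
        = (truncBinom r (n + 1)).eval (-1) + genBinom r (n + 1) * (-1) ^ (n + 1) := by
      simp [truncBinom, Finset.sum_range_succ _ (n + 1)]
    have h2 := aux_sign r n
    have hf : (Nat.factorial n : ℚ) ≠ 0 := by exact_mod_cast Nat.factorial_ne_zero n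
    have hn : (n : ℚ) + 1 ≠ 0 := by positivity
    rw [h, ih, genBinom, div_mul_eq_mul_div, mul_comm _ ((-1 : ℚ) ^ (n + 1)), h2,
      Finset.prod_range_succ, Nat.factorial_succ]
    push_cast
    field_simp
    ring

theorem aux_factor (p d m : ℕ) (hp : p.Prime) (hd : 2 ≤ d) (hpd : p ∣ d)
    (hpm : ¬ p ∣ m) (i : ℕ) :
    ((i : ℚ) + 1 - (m : ℚ) / d) / ((i : ℚ) + 1) ≠ 0 ∧
    padicValRat p (((i : ℚ) + 1 - (m : ℚ) / d) / ((i : ℚ) + 1)) < 0 := by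
  haveI := Fact.mk hp
  have hd0 : (d : ℚ) ≠ 0 := by positivity
  have hi : (i : ℚ) + 1 ≠ 0 := by positivity
  have e : ((i : ℚ) + 1 - (m : ℚ) / d) / ((i : ℚ) + 1)
      = (((i + 1) * d - m : ℤ) : ℚ) / (((i + 1) * d : ℕ) : ℚ) := by
    push_cast
    field_simp
  have hnd : ¬ (p : ℤ) ∣ ((i + 1) * d - m : ℤ) := by
    intro h
    apply hpm
    have h1 : (p : ℤ) ∣ (i + 1) * d := Dvd.dvd.mul_left (by exact_mod_cast hpd) _
    have := (dvd_sub_right h1).1 h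
    exact_mod_cast this
  have hz : ((i + 1) * d - m : ℤ) ≠ 0 := fun h => hnd (h ▸ dvd_zero _)
  have hw : (i + 1) * d ≠ 0 := by positivity
  have hzq : (((i + 1) * d - m : ℤ) : ℚ) ≠ 0 := by exact_mod_cast hz
  have hwq : (((i + 1) * d : ℕ) : ℚ) ≠ 0 := by exact_mod_cast hw
  rw [e]
  refine ⟨div_ne_zero hzq hwq, ?_⟩
  rw [padicValRat.div hzq hwq, padicValRat.of_int, padicValRat.of_nat,
    padicValInt.eq_zero_of_not_dvd hnd]
  have : 1 ≤ padicValNat p ((i + 1) * d) :=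
    one_le_padicValNat_of_dvd hw (Dvd.dvd.mul_left hpd _)
  omega

/-- Let `p` be prime, `d ≥ 2` divisible by `p`, `m > 0` not divisible by
`p`, and `r = m/d`. Then for every integer `E ≥ 2`, the `p`-adic valuation of
`V_{r,E}(-1) = Σ_{k=0}^{E-1} (-1)^k C(r,k)` is strictly negative; in particular `V_{r,E}(-1)`
is not a `p`-adic integer. -/
theorem stmt11 (p d m : ℕ) (hp : p.Prime) (hd : 2 ≤ d) (hpd : p ∣ d)
    (hm : 0 < m) (hpm : ¬ p ∣ m) :
    ∀ E : ℕ, 2 ≤ E →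
      padicValRat p ((truncBinom ((m : ℚ) / d) E).eval (-1)) < 0 := by
  haveI := Fact.mk hp
  have key : ∀ n : ℕ, (truncBinom ((m : ℚ) / d) (n + 2)).eval (-1) ≠ 0 ∧
      padicValRat p ((truncBinom ((m : ℚ) / d) (n + 2)).eval (-1)) < 0 := by
    intro n
    induction n with
    | zero =>
      have := aux_factor p d m hp hd hpd hpm 0
      rw [aux_succ]
      simpa using this
    | succ n ih =>
      obtain ⟨h1, h2⟩ := aux_factor p d m hp hd hpd hpm (n + 1)
      have e : (truncBinom ((m : ℚ) / d) (n + 1 + 2)).eval (-1)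
          = (truncBinom ((m : ℚ) / d) (n + 2)).eval (-1) *
            ((((n + 1 : ℕ) : ℚ) + 1 - (m : ℚ) / d) / (((n + 1 : ℕ) : ℚ) + 1)) := by
        rw [aux_succ, aux_succ, Finset.prod_range_succ, Nat.factorial_succ (n + 1), div_mul_div_comm]
        congr 1
        push_cast
        ring
      rw [e]
      refine ⟨mul_ne_zero ih.1 h1, ?_⟩
      rw [padicValRat.mul ih.1 h1]
      linarith [ih.2]
  intro E hE
  obtain ⟨n, rfl⟩ := Nat.exists_eq_add_of_le' hE
  exact (key n).2
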